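/- arXiv:2308.03071 — 2 statements merged into one kernel-verified Lean document; each statement's English description precedes it below -/
import Mathlib

section
/- Let d ≥ 2. For every unimodular lattice Λ ⊆ K̃^d there exists a = (a₁,…,a_d) ∈ ℝ^d with a₁ + … + a_d = 0 such that λ_{1,a}(Λ) = λ_{2,a}(Λ) = … = λ_{d,a}(Λ), i.e. the Minkowski flag of Λ with respect to the norm ‖·‖_a is trivial. -/
noncomputable section

open scoped Classical

variable (Fq : Type) [Field Fq] [Fintype Fq]

/-- `K̃ = 𝔽_q((x⁻¹))`, realized as formal Laurent series in `t = x⁻¹`. -/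
abbrev Kt := LaurentSeries Fq

/-- The element `x` of `K̃` (the inverse of the Laurent series variable). -/
def Kx : Kt Fq := HahnSeries.single (-1 : ℤ) 1

/-- Absolute value `|f| = q^{deg f}`, i.e. `q^{-order f}` in terms of `t = x⁻¹`. -/
def Kabs (f : Kt Fq) : ℝ := if f = 0 then 0 else (Fintype.card Fq : ℝ) ^ (-f.order)

/-- The ring embedding of `R = 𝔽_q[x]` into `K̃`. -/
def polyK : Polynomial Fq →+* Kt Fq := (Polynomial.aeval (Kx Fq)).toRingHom

/-- Sup norm on `K̃^d`. -/
def vnorm {d : ℕ} (v : Fin d → Kt Fq) : ℝ := ⨆ i, Kabs Fq (v i)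

/-- The lattice `g·R^d`. -/
def lattice {d : ℕ} (g : Matrix (Fin d) (Fin d) (Kt Fq)) : Set (Fin d → Kt Fq) :=
  {v | ∃ c : Fin d → Polynomial Fq, v = g.mulVec fun j => polyK Fq (c j)}

/-- `i`-th successive minimum of `Λ` with respect to a norm `nrm`: the least `r > 0` such that
`Λ` contains `i` linearly independent vectors of norm at most `r`. -/
def minimaN {d : ℕ} (nrm : (Fin d → Kt Fq) → ℝ) (Λ : Set (Fin d → Kt Fq)) (i : ℕ) : ℝ :=
  sInf {r : ℝ | 0 < r ∧ ∃ v : Fin i → Fin d → Kt Fq,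
    (∀ j, v j ∈ Λ) ∧ LinearIndependent (Kt Fq) v ∧ ∀ j, nrm (v j) ≤ r}

/-- `i`-th successive minimum with respect to the sup norm. -/
def minima {d : ℕ} (Λ : Set (Fin d → Kt Fq)) (i : ℕ) : ℝ := minimaN Fq (vnorm Fq) Λ i

/-- Covering radius of `Λ` with respect to the norm `nrm`. -/
def covRad {d : ℕ} (nrm : (Fin d → Kt Fq) → ℝ) (Λ : Set (Fin d → Kt Fq)) : ℝ :=
  ⨆ w : Fin d → Kt Fq, ⨅ u : Λ, nrm (w - u.1)

/-- Length of the shortest nonzero vector of `Λ`. -/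
def ell {d : ℕ} (Λ : Set (Fin d → Kt Fq)) : ℝ :=
  sInf {r : ℝ | ∃ v ∈ Λ, v ≠ 0 ∧ vnorm Fq v = r}

/-- `Λ` is well rounded: it contains `d` linearly independent vectors of norm `ℓ(Λ)`. -/
def IsWellRounded {d : ℕ} (Λ : Set (Fin d → Kt Fq)) : Prop :=
  ∃ v : Fin d → Fin d → Kt Fq, (∀ j, v j ∈ Λ) ∧ LinearIndependent (Kt Fq) v ∧
    ∀ j, vnorm Fq (v j) = ell Fq Λ

/-- The multiplicative "norm" `N(v) = ∏ |v i|`. -/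
def Nprod {d : ℕ} (v : Fin d → Kt Fq) : ℝ := ∏ i, Kabs Fq (v i)

/-- The Minkowski function `μ(Λ) = sup_w inf_{u ∈ Λ} N(w - u)`. -/
def mink {d : ℕ} (Λ : Set (Fin d → Kt Fq)) : ℝ :=
  ⨆ w : Fin d → Kt Fq, ⨅ u : Λ, Nprod Fq (w - u.1)

/-- The twisted norm `‖v‖_a = max_i q^{a_i}·|v_i|` for `a ∈ ℝ^d`. -/
def anorm {d : ℕ} (a : Fin d → ℝ) (v : Fin d → Kt Fq) : ℝ :=
  ⨆ i, (Fintype.card Fq : ℝ) ^ a i * Kabs Fq (v i)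

open scoped BigOperators

theorem polyK_monomial (m : ℕ) (c : Fq) :
    polyK Fq (Polynomial.monomial m c) = HahnSeries.single (-(m : ℤ)) c := by
  have h1 : polyK Fq (Polynomial.monomial m c)
      = Polynomial.aeval (Kx Fq) (Polynomial.monomial m c) := rfl
  rw [h1, Polynomial.aeval_monomial, Kx, HahnSeries.single_pow,
    show algebraMap Fq (Kt Fq) c = HahnSeries.single 0 c from by
      rw [HahnSeries.algebraMap_apply']
      exact HahnSeries.ofPowerSeries_C c,
    HahnSeries.single_mul_single]
  simp

theorem coeff_polyK (p : Polynomial Fq) (n : ℕ) :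
    (polyK Fq p).coeff (-(n : ℤ)) = p.coeff n := by
  induction p using Polynomial.induction_on' with
  | add p q hp hq => simp [hp, hq]
  | monomial m c =>
    rw [polyK_monomial, HahnSeries.coeff_single, Polynomial.coeff_monomial]
    by_cases h : m = n
    · simp [h]
    · rw [if_neg h, if_neg (by omega)]

theorem coeff_monomial_mul (m : ℕ) (c : Fq) (f : Kt Fq) (n : ℤ) :
    (polyK Fq (Polynomial.monomial m c) * f).coeff n = c * f.coeff (n + m) := by
  rw [polyK_monomial, HahnSeries.coeff_single_mul]
  simp

theorem lattice_sub {d : ℕ} {g : Matrix (Fin d) (Fin d) (Kt Fq)} {v w : Fin d → Kt Fq}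
    (hv : v ∈ lattice Fq g) (hw : w ∈ lattice Fq g) : v - w ∈ lattice Fq g := by
  obtain ⟨c, rfl⟩ := hv
  obtain ⟨e, rfl⟩ := hw
  refine ⟨c - e, ?_⟩
  rw [← Matrix.mulVec_sub]
  congr 1
  ext1 j
  simp

theorem lattice_smul {d : ℕ} {g : Matrix (Fin d) (Fin d) (Kt Fq)} {v : Fin d → Kt Fq}
    (p : Polynomial Fq) (hv : v ∈ lattice Fq g) : polyK Fq p • v ∈ lattice Fq g := by
  obtain ⟨c, rfl⟩ := hv
  refine ⟨fun j => p * c j, ?_⟩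
  rw [← Matrix.mulVec_smul]
  congr 1
  ext1 j
  simp

/-- Lattice vectors of `b`-norm at most one. -/
def smallVecs {d : ℕ} (g : Matrix (Fin d) (Fin d) (Kt Fq)) (b : Fin d → ℤ) :
    Set (Fin d → Kt Fq) :=
  {v | v ∈ lattice Fq g ∧ ∀ i, ∀ n < b i, (v i).coeff n = 0}

theorem exists_family {d : ℕ} {S : Set (Fin d → Kt Fq)}
    (hS : Submodule.span (Kt Fq) S = ⊤) :
    ∃ v : Fin d → Fin d → Kt Fq, (∀ j, v j ∈ S) ∧ LinearIndependent (Kt Fq) v := by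
  obtain ⟨B, hB, hspan, hli⟩ := exists_linearIndependent (Kt Fq) S
  let bas := Module.Basis.mk hli (by rw [Subtype.range_coe, hspan, hS])
  let e := bas.indexEquiv (Pi.basisFun (Kt Fq) (Fin d))
  exact ⟨fun j => (e.symm j : Fin d → Kt Fq), fun j => hB (e.symm j).2,
    hli.comp _ e.symm.injective⟩

theorem step {d : ℕ} {g : Matrix (Fin d) (Fin d) (Kt Fq)} {b : Fin d → ℤ}
    (hS : Submodule.span (Kt Fq) (smallVecs Fq g b) = ⊤) {w : Fin d → Kt Fq}
    (hw : w ∈ lattice Fq g) (hw0 : w ≠ 0) (hsm : ∀ i, ∀ n ≤ b i, (w i).coeff n = 0) :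
    ∃ i, Submodule.span (Kt Fq) (smallVecs Fq g (Function.update b i (b i + 1))) = ⊤ := by
  have hex : ∃ k : ℕ, ∃ i, (w i).coeff (b i + k) ≠ 0 := by
    by_contra! h
    apply hw0
    ext i n
    rcases le_total n (b i) with hn | hn
    · simpa using hsm i n hn
    · have := h (n - b i).toNat i
      rw [Int.toNat_of_nonneg (by omega)] at this
      simpa using this
  obtain ⟨i, hi⟩ := Nat.find_spec hex
  have hmin : ∀ j n, n < b j + Nat.find hex → (w j).coeff n = 0 := by
    intro j n hn
    rcases le_total n (b j) with hn' | hn'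
    · exact hsm j n hn'
    · by_contra hc
      refine Nat.find_min hex (m := (n - b j).toNat) (by omega) ⟨j, ?_⟩
      rw [Int.toNat_of_nonneg (by omega)]
      simpa using hc
  have hpos : 1 ≤ Nat.find hex := by
    by_contra hc
    exact hi (hsm i _ (by omega))
  generalize Nat.find hex = k at *
  obtain ⟨k, rfl⟩ : ∃ l, k = l + 1 := ⟨k - 1, by omega⟩
  refine ⟨i, ?_⟩
  rw [eq_top_iff, ← hS, Submodule.span_le]
  intro v hv
  set β := (w i).coeff (b i + ((k + 1 : ℕ) : ℤ)) with hβ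
  set c : Fq := (v i).coeff (b i) / β
  have h1 : polyK Fq (Polynomial.monomial k 1) • w ∈
      smallVecs Fq g (Function.update b i (b i + 1)) := by
    refine ⟨lattice_smul Fq _ hw, fun j n hn => ?_⟩
    rw [Pi.smul_apply, smul_eq_mul, coeff_monomial_mul, one_mul]
    apply hmin
    by_cases hj : j = i
    · subst hj
      rw [Function.update_self] at hn
      push_cast; omega
    · rw [Function.update_of_ne hj] at hn
      push_cast; omega
  have h2 : v - polyK Fq (Polynomial.monomial (k + 1) c) • w ∈
      smallVecs Fq g (Function.update b i (b i + 1)) := by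
    refine ⟨lattice_sub Fq hv.1 (lattice_smul Fq _ hw), fun j n hn => ?_⟩
    rw [Pi.sub_apply, Pi.smul_apply, smul_eq_mul, HahnSeries.coeff_sub, coeff_monomial_mul]
    have key : n < b j → (v j).coeff n - c * (w j).coeff (n + ((k + 1 : ℕ) : ℤ)) = 0 := by
      intro hn
      rw [hv.2 j n hn, hmin j _ (by omega)]
      simp
    by_cases hj : j = i
    · subst hj
      rw [Function.update_self] at hn
      rcases (show n < b j ∨ n = b j by omega) with h | h
      · exact key h
      · subst h
        rw [← hβ, div_mul_cancel₀ _ hi, sub_self]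
    · rw [Function.update_of_ne hj] at hn
      exact key hn
  have h3 : v = (v - polyK Fq (Polynomial.monomial (k + 1) c) • w)
      + polyK Fq (Polynomial.monomial 1 c) • (polyK Fq (Polynomial.monomial k 1) • w) := by
    rw [smul_smul, ← map_mul, Polynomial.monomial_mul_monomial, mul_one, add_comm 1 k]
    simp
  rw [h3]
  exact Submodule.add_mem _ (Submodule.subset_span h2)
    (Submodule.smul_mem _ _ (Submodule.subset_span h1))

theorem det_bound {d : ℕ} {v : Matrix (Fin d) (Fin d) (Kt Fq)} {b : Fin d → ℤ}
    (h : ∀ j i, ∀ n < b i, (v j i).coeff n = 0) :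
    ((∑ i, b i : ℤ) : WithTop ℤ) ≤ v.det.orderTop := by
  have h' : ∀ j i, ((b i : ℤ) : WithTop ℤ) ≤ (v j i).orderTop := by
    intro j i
    rw [HahnSeries.le_orderTop_iff_forall]
    intro n hn
    exact h j i n (by exact_mod_cast hn)
  have hprod : ∀ (s : Finset (Fin d)) (f : Fin d → Kt Fq),
      (∀ i, ((b i : ℤ) : WithTop ℤ) ≤ (f i).orderTop) →
      ((∑ i ∈ s, b i : ℤ) : WithTop ℤ) ≤ (∏ i ∈ s, f i).orderTop := by
    intro s f hf
    induction s using Finset.induction_on with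
    | empty => simp
    | insert a s ha ih =>
      rw [Finset.sum_insert ha, Finset.prod_insert ha, HahnSeries.orderTop_mul, WithTop.coe_add]
      exact add_le_add (hf a) ih
  rw [Matrix.det_apply, ← HahnSeries.addVal_apply]
  apply AddValuation.map_le_sum
  intro σ _
  have := hprod Finset.univ (fun i => v (σ i) i) (fun i => h' _ i)
  rw [HahnSeries.addVal_apply]
  rcases Int.units_eq_one_or (Equiv.Perm.sign σ) with hs | hs
  · rw [hs, one_smul]; exact this
  · rw [hs, Units.neg_smul, one_smul, HahnSeries.orderTop_neg]; exact this

theorem sum_bound {d : ℕ} {g : Matrix (Fin d) (Fin d) (Kt Fq)} (hg : Kabs Fq g.det = 1)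
    {b : Fin d → ℤ} (hS : Submodule.span (Kt Fq) (smallVecs Fq g b) = ⊤) :
    ∑ i, b i ≤ 0 := by
  obtain ⟨v, hv, hli⟩ := exists_family Fq hS
  choose c hc using fun j => (hv j).1
  have hq : (1 : ℝ) < Fintype.card Fq := by exact_mod_cast Fintype.one_lt_card
  have hdet : g.det.orderTop = ((0 : ℤ) : WithTop ℤ) := by
    unfold Kabs at hg
    split_ifs at hg with h0
    · norm_num at hg
    · rw [← HahnSeries.order_eq_orderTop_of_ne_zero h0]
      have := (zpow_eq_one_iff_right₀ (by linarith) hq.ne').1 hg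
      rw [neg_eq_zero] at this
      rw [this]
  have hmat : Matrix.of v = ((Matrix.of c).map (polyK Fq)) * g.transpose := by
    ext1 j i
    rw [Matrix.of_apply, hc j, Matrix.mul_apply]
    simp [Matrix.mulVec, dotProduct, mul_comm]
  have hdv : (Matrix.of v).det = polyK Fq (Matrix.of c).det * g.det := by
    rw [hmat, Matrix.det_mul, Matrix.det_transpose, RingHom.map_det]
    rfl
  have hne : (Matrix.of v).det ≠ 0 := by
    have : IsUnit (Matrix.of v) := Matrix.linearIndependent_rows_iff_isUnit.1 hli
    exact ((Matrix.isUnit_iff_isUnit_det _).1 this).ne_zero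
  have hb := det_bound Fq (v := Matrix.of v) (b := b) (fun j => (hv j).2)
  rw [hdv, HahnSeries.orderTop_mul, hdet] at hb
  have hp : (Matrix.of c).det ≠ 0 := by
    intro h
    rw [hdv, h] at hne
    simp at hne
  have hle : (polyK Fq (Matrix.of c).det).orderTop
      ≤ ((-((Matrix.of c).det.natDegree : ℤ) : ℤ) : WithTop ℤ) := by
    apply HahnSeries.orderTop_le_of_coeff_ne_zero
    rw [coeff_polyK]
    exact Polynomial.leadingCoeff_ne_zero.2 hp
  have h3 := hb.trans (add_le_add_left hle _)
  rw [← WithTop.coe_add, WithTop.coe_le_coe] at h3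
  omega

theorem exists_start {d : ℕ} {g : Matrix (Fin d) (Fin d) (Kt Fq)} (hg : Kabs Fq g.det = 1) :
    ∃ b : Fin d → ℤ, Submodule.span (Kt Fq) (smallVecs Fq g b) = ⊤ := by
  have hdet : g.det ≠ 0 := by
    intro h
    simp [Kabs, h] at hg
  have hli : LinearIndependent (Kt Fq) g.col :=
    Matrix.linearIndependent_cols_iff_isUnit.2
      ((Matrix.isUnit_iff_isUnit_det _).2 hdet.isUnit)
  have hsp := hli.span_eq_top_of_card_eq_finrank' (by simp)
  refine ⟨fun i => -∑ j, |(g i j).order|, ?_⟩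
  rw [eq_top_iff, ← hsp]
  apply Submodule.span_mono
  rintro _ ⟨j, rfl⟩
  refine ⟨⟨Pi.single j 1, ?_⟩, fun i n hn => ?_⟩
  · have : (fun k => polyK Fq ((Pi.single j 1 : Fin d → Polynomial Fq) k)) = Pi.single j 1 := by
      ext1 k
      by_cases h : k = j
      · subst h; simp
      · simp [h]
    rw [this, Matrix.mulVec_single_one]
  · apply HahnSeries.coeff_eq_zero_of_lt_order
    have h1 := Finset.single_le_sum (f := fun j => |(g i j).order|) (fun _ _ => abs_nonneg _)
      (Finset.mem_univ j)
    have h2 := neg_abs_le (g i j).order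
    simp only [Matrix.col_apply] at *
    omega

theorem exists_max {d : ℕ} {g : Matrix (Fin d) (Fin d) (Kt Fq)} (hg : Kabs Fq g.det = 1) :
    ∃ b : Fin d → ℤ, Submodule.span (Kt Fq) (smallVecs Fq g b) = ⊤ ∧
      ∀ w ∈ lattice Fq g, w ≠ 0 → ∃ i, ∃ n ≤ b i, (w i).coeff n ≠ 0 := by
  obtain ⟨b0, hb0⟩ := exists_start Fq hg
  obtain ⟨m, ⟨b, hb, hbm⟩, hmax⟩ := Int.exists_greatest_of_bdd
    (P := fun z => ∃ b : Fin d → ℤ, Submodule.span (Kt Fq) (smallVecs Fq g b) = ⊤ ∧ ∑ i, b i = z)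
    ⟨0, by rintro z ⟨b, hb, rfl⟩; exact sum_bound Fq hg hb⟩ ⟨_, b0, hb0, rfl⟩
  refine ⟨b, hb, fun w hw hw0 => ?_⟩
  by_contra! hc
  obtain ⟨i, hi⟩ := step Fq hb hw hw0 hc
  have h1 := hmax _ ⟨_, hi, rfl⟩
  rw [Finset.sum_update_of_mem (Finset.mem_univ i)] at h1
  rw [← hbm, ← Finset.add_sum_erase _ _ (Finset.mem_univ i),
    Finset.sdiff_singleton_eq_erase] at h1
  omega

theorem term_eq (β s : ℝ) {f : Kt Fq} (hf : f ≠ 0) :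
    (Fintype.card Fq : ℝ) ^ (β - s) * Kabs Fq f
      = (Fintype.card Fq : ℝ) ^ (β - f.order - s) := by
  have hq : (0 : ℝ) < Fintype.card Fq := by exact_mod_cast Fintype.card_pos
  rw [Kabs, if_neg hf, ← Real.rpow_intCast, ← Real.rpow_add hq]
  congr 1
  push_cast
  ring

/-- For every unimodular lattice `Λ ⊆ K̃^d` there exists `a ∈ ℝ^d` with
`Σ a_i = 0` such that all the successive minima of `Λ` with respect to `‖·‖_a` coincide,
i.e. the Minkowski flag of `Λ` with respect to `‖·‖_a` is trivial. -/
theorem exists_real_trivial_flag {d : ℕ} (hd : 2 ≤ d)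
    (g : Matrix (Fin d) (Fin d) (Kt Fq)) (hg : Kabs Fq g.det = 1) :
    ∃ a : Fin d → ℝ, ∑ i, a i = 0 ∧
      ∀ i : Fin d, minimaN Fq (anorm Fq a) (lattice Fq g) ((i : ℕ) + 1)
        = minimaN Fq (anorm Fq a) (lattice Fq g) 1 := by
  obtain ⟨b, hspan, hlow⟩ := exists_max Fq hg
  obtain ⟨v, hv, hli⟩ := exists_family Fq hspan
  have hq : (1 : ℝ) < Fintype.card Fq := by exact_mod_cast Fintype.one_lt_card
  have hq0 : (0 : ℝ) < Fintype.card Fq := by linarith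
  have hd0 : (d : ℝ) ≠ 0 := by
    have : d ≠ 0 := by omega
    exact_mod_cast this
  have : Nonempty (Fin d) := ⟨⟨0, by omega⟩⟩
  set s : ℝ := (∑ i, (b i : ℝ)) / d with hs
  refine ⟨fun i => b i - s, ?_, ?_⟩
  · rw [Finset.sum_sub_distrib, Finset.sum_const, Finset.card_univ, Fintype.card_fin,
      nsmul_eq_mul, hs]
    field_simp
    ring
  have main : ∀ i : ℕ, 1 ≤ i → i ≤ d →
      minimaN Fq (anorm Fq fun i => (b i : ℝ) - s) (lattice Fq g) i
        = (Fintype.card Fq : ℝ) ^ (-s) := by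
    intro i hi1 hid
    have hpos : 0 < (Fintype.card Fq : ℝ) ^ (-s) := Real.rpow_pos_of_pos hq0 _
    apply IsLeast.csInf_eq
    refine ⟨⟨hpos, fun j => v (Fin.castLE hid j), fun j => (hv _).1,
      hli.comp _ (Fin.castLE_injective hid), fun j => ?_⟩, ?_⟩
    · apply ciSup_le
      intro k
      beta_reduce
      by_cases h0 : v (Fin.castLE hid j) k = 0
      · rw [h0, Kabs, if_pos rfl, mul_zero]
        exact hpos.le
      · rw [term_eq Fq _ _ h0]
        apply Real.rpow_le_rpow_of_exponent_le hq.le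
        have h1 : b k ≤ (v (Fin.castLE hid j) k).order := by
          by_contra! hc
          exact h0 (HahnSeries.coeff_order_eq_zero.1 ((hv (Fin.castLE hid j)).2 k _ hc))
        have h2 : (b k : ℝ) ≤ ((v (Fin.castLE hid j) k).order : ℝ) := by exact_mod_cast h1
        linarith
    · rintro r ⟨-, u, hu, huli, hur⟩
      obtain ⟨k, n, hn, hk⟩ := hlow _ (hu ⟨0, hi1⟩) (huli.ne_zero _)
      refine le_trans ?_ (hur ⟨0, hi1⟩)
      have h0 : u ⟨0, hi1⟩ k ≠ 0 := by
        intro h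
        rw [h] at hk
        simp at hk
      refine le_trans ?_ (le_ciSup (Set.finite_range _).bddAbove k)
      simp only []
      rw [term_eq Fq _ _ h0]
      apply Real.rpow_le_rpow_of_exponent_le hq.le
      have h1 := (HahnSeries.order_le_of_coeff_ne_zero hk).trans hn
      have h2 : ((u ⟨0, hi1⟩ k).order : ℝ) ≤ (b k : ℝ) := by exact_mod_cast h1
      linarith
  intro i
  rw [main _ (by omega) (by omega), main 1 le_rfl (by omega)]
end
end

section
/- Let d ≥ 2, let a = (a₁,…,a_d) ∈ ℝ^d with a₁ + … + a_d = 0, and let Λ ⊆ K̃^d be a unimodular lattice such that λ_{1,a}(Λ) = λ_{2,a}(Λ) = … = λ_{d,a}(Λ). Then a₁,…,a_d are all congruent modulo 1, i.e. a_i − a_j ∈ ℤ for all i, j. -/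
noncomputable section

open scoped Classical

variable (Fq : Type) [Field Fq] [Fintype Fq]

/-- Monomial `x^m`. -/
def xp (m : ℤ) : Kt Fq := HahnSeries.single (-m) 1

/-- Embedding of power series in `x⁻¹`. -/
def ps : PowerSeries Fq →+* Kt Fq := HahnSeries.ofPowerSeries ℤ Fq

lemma xp_add (m n : ℤ) : xp Fq (m + n) = xp Fq m * xp Fq n := by
  simp [xp, HahnSeries.single_mul_single, add_comm]

lemma xp_zero : xp Fq 0 = 1 := by
  simp [xp]

lemma xp_ne (m : ℤ) : xp Fq m ≠ 0 := by
  simp [xp]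

lemma xp_sum {ι : Type} (s : Finset ι) (m : ι → ℤ) :
    xp Fq (∑ i ∈ s, m i) = ∏ i ∈ s, xp Fq (m i) := by
  induction s using Finset.induction_on with
  | empty => simp [xp_zero]
  | insert i s hi ih => rw [Finset.sum_insert hi, Finset.prod_insert hi, xp_add, ih]

lemma ps_X : ps Fq PowerSeries.X = xp Fq (-1) := by
  simp [ps, xp, HahnSeries.ofPowerSeries_X]

lemma ps_C (r : Fq) : ps Fq (PowerSeries.C r) = HahnSeries.C r := by
  simp [ps, HahnSeries.ofPowerSeries_C]

lemma Kx_pow (n : ℕ) : (Kx Fq) ^ n = xp Fq n := by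
  induction n with
  | zero => simp [xp_zero]
  | succ n ih => rw [pow_succ, ih]; push_cast; rw [xp_add]; rfl

lemma polyK_C (r : Fq) : polyK Fq (Polynomial.C r) = HahnSeries.C r := by
  have h : polyK Fq (Polynomial.C r) = algebraMap Fq (Kt Fq) r := by simp [polyK]
  rw [h, HahnSeries.algebraMap_apply', ← ps_C]
  rfl

lemma polyK_X : polyK Fq Polynomial.X = Kx Fq := by
  simp [polyK]

lemma one_lt_q : (1 : ℝ) < (Fintype.card Fq : ℝ) := by
  exact_mod_cast Fintype.one_lt_card

lemma Kabs_mul (f g : Kt Fq) : Kabs Fq (f * g) = Kabs Fq f * Kabs Fq g := by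
  unfold Kabs
  by_cases hf : f = 0
  · simp [hf]
  by_cases hg : g = 0
  · simp [hg]
  have hq := one_lt_q Fq
  rw [if_neg hf, if_neg hg, if_neg (mul_ne_zero hf hg), HahnSeries.order_mul hf hg,
    ← zpow_add₀ (by positivity)]
  congr 1
  ring

lemma Kabs_xp (m : ℤ) : Kabs Fq (xp Fq m) = (Fintype.card Fq : ℝ) ^ m := by
  unfold Kabs
  rw [if_neg (xp_ne Fq m)]
  simp [xp, HahnSeries.order_single]

lemma Kabs_nonneg (f : Kt Fq) : 0 ≤ Kabs Fq f := by
  unfold Kabs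
  split_ifs <;> positivity

lemma Kabs_pos {f : Kt Fq} (hf : f ≠ 0) : 0 < Kabs Fq f := by
  have hq := one_lt_q Fq
  unfold Kabs
  rw [if_neg hf]
  positivity

lemma Kabs_zero : Kabs Fq 0 = 0 := by
  simp [Kabs]

lemma Kabs_ge_of_coeff {f : Kt Fq} {n : ℤ} (h : f.coeff n ≠ 0) :
    (Fintype.card Fq : ℝ) ^ (-n) ≤ Kabs Fq f := by
  have hf : f ≠ 0 := by rintro rfl; simp at h
  unfold Kabs
  rw [if_neg hf]
  exact zpow_le_zpow_right₀ (one_lt_q Fq).le (neg_le_neg (HahnSeries.order_le_of_coeff_ne_zero h))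

lemma Kabs_ps (p : PowerSeries Fq) : Kabs Fq (ps Fq p) ≤ 1 := by
  unfold Kabs
  split_ifs with h
  · norm_num
  · apply zpow_le_one_of_nonpos₀ (one_lt_q Fq).le
    rw [neg_nonpos]
    by_contra! hlt
    have h1 := HahnSeries.coeff_order_eq_zero.not.2 h
    apply h1
    exact HahnSeries.embDomain_notin_range (by
      rintro ⟨n, hn⟩
      simp at hn
      omega)

lemma Kabs_le_iff (f : Kt Fq) (m : ℤ) :
    Kabs Fq f ≤ (Fintype.card Fq : ℝ) ^ m ↔ ∃ p, f = xp Fq m * ps Fq p := by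
  constructor
  · intro h
    by_cases hf : f = 0
    · exact ⟨0, by simp [hf]⟩
    unfold Kabs at h
    rw [if_neg hf, zpow_le_zpow_iff_right₀ (one_lt_q Fq)] at h
    obtain ⟨k, hk⟩ := Int.eq_ofNat_of_zero_le (show 0 ≤ f.order + m by omega)
    refine ⟨PowerSeries.X ^ k * LaurentSeries.powerSeriesPart f, ?_⟩
    have h2 : ps Fq (PowerSeries.X ^ k) = xp Fq (-k) := by
      simp [ps, xp, HahnSeries.ofPowerSeries_X_pow]
    rw [map_mul, h2, ← mul_assoc, ← xp_add]
    have h3 := LaurentSeries.single_order_mul_powerSeriesPart f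
    conv_lhs => rw [← h3]
    have : -(m + -(k:ℤ)) = f.order := by omega
    simp only [xp, this]
    rfl
  · rintro ⟨p, rfl⟩
    rw [Kabs_mul, Kabs_xp]
    have hq := one_lt_q Fq
    exact mul_le_of_le_one_right (by positivity) (Kabs_ps Fq p)

lemma polyK_coeff (c : Polynomial Fq) (n : ℕ) :
    (polyK Fq c).coeff (-(n : ℤ)) = c.coeff n := by
  induction c using Polynomial.induction_on' with
  | add p q hp hq => rw [map_add, HahnSeries.coeff_add, hp, hq, Polynomial.coeff_add]
  | monomial k r =>
    rw [← Polynomial.C_mul_X_pow_eq_monomial, map_mul, map_pow, polyK_C, polyK_X, Kx_pow, xp,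
      HahnSeries.C_apply, HahnSeries.single_mul_single, HahnSeries.coeff_single,
      Polynomial.coeff_C_mul, Polynomial.coeff_X_pow]
    simp

lemma Kabs_polyK {c : Polynomial Fq} (hc : c ≠ 0) : 1 ≤ Kabs Fq (polyK Fq c) := by
  have h := Kabs_ge_of_coeff Fq (f := polyK Fq c) (n := -(c.natDegree : ℤ)) (by
    rw [polyK_coeff]; simpa using hc)
  refine le_trans ?_ h
  exact one_le_zpow₀ (one_lt_q Fq).le (by simp)

/-- Hadamard-type bound. -/
lemma Kabs_det_le {d : ℕ} (V : Matrix (Fin d) (Fin d) (Kt Fq)) (m : Fin d → ℤ)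
    (h : ∀ i j, Kabs Fq (V i j) ≤ (Fintype.card Fq : ℝ) ^ m i) :
    Kabs Fq V.det ≤ (Fintype.card Fq : ℝ) ^ (∑ i, m i) := by
  simp only [Kabs_le_iff] at h
  choose p hp using h
  rw [Kabs_le_iff]
  refine ⟨(Matrix.of p).det, ?_⟩
  rw [xp_sum, RingHom.map_det, ← Matrix.det_mul_column]
  congr 1
  ext1 i j
  simp [hp]

lemma polyK_injective : Function.Injective (polyK Fq) := by
  rw [injective_iff_map_eq_zero]
  intro c hc
  by_contra h
  have := Kabs_polyK Fq h
  rw [hc, Kabs_zero] at this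
  norm_num at this

lemma reduction {d : ℕ} (s : ℕ) : ∀ (B : Matrix (Fin d) (Fin d) (Kt Fq)) (k : Fin d → ℕ)
    (p : Matrix (Fin d) (Fin d) (PowerSeries Fq)), ∑ j, k j = s →
    (∀ i j, B i j = xp Fq (k j) * ps Fq (p i j)) → B.det ≠ 0 → Kabs Fq B.det < 1 →
    ∃ v ∈ lattice Fq B, v ≠ 0 ∧ ∀ i, ∃ r, v i = xp Fq (-1) * ps Fq r := by
  induction s with
  | zero => ?_
  | succ s ih => ?_
  all_goals
    intro B k p hs hB hdet hlt
    have hBdet : B.det = xp Fq (∑ j, (k j : ℤ)) * ps Fq p.det := by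
      rw [xp_sum, RingHom.map_det, ← Matrix.det_mul_row]
      congr 1
      ext1 i j
      simp [hB]
    have hA : (p.map PowerSeries.constantCoeff).det = 0 := by
      by_contra hne
      have hu : IsUnit p.det := by
        rw [PowerSeries.isUnit_iff_constantCoeff, RingHom.map_det]
        exact isUnit_iff_ne_zero.2 hne
      obtain ⟨w, hw⟩ := hu.exists_right_inv
      have h1 : Kabs Fq (ps Fq p.det) * Kabs Fq (ps Fq w) = 1 := by
        rw [← Kabs_mul, ← map_mul, hw, map_one, ← xp_zero, Kabs_xp, zpow_zero]
      have h2 : 1 ≤ Kabs Fq (ps Fq p.det) := by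
        have := Kabs_ps Fq w
        have := Kabs_nonneg Fq (ps Fq p.det)
        nlinarith
      rw [hBdet, Kabs_mul, Kabs_xp] at hlt
      have h3 : (1:ℝ) ≤ (Fintype.card Fq : ℝ) ^ (∑ j, (k j : ℤ)) :=
        one_le_zpow₀ (one_lt_q Fq).le (by positivity)
      nlinarith
    obtain ⟨α, hα, hAα⟩ := Matrix.exists_mulVec_eq_zero_iff.2 hA
    obtain ⟨j, hj, hmax⟩ := Finset.exists_max_image (Finset.univ.filter fun l => α l ≠ 0) k (by
      obtain ⟨l, hl⟩ := Function.ne_iff.1 hα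
      exact ⟨l, by simpa using hl⟩)
    simp only [Finset.mem_filter, Finset.mem_univ, true_and] at hj hmax
    let u : Fin d → Polynomial Fq := fun l => Polynomial.C (α l) * Polynomial.X ^ (k j - k l)
    have hX : ∀ i, ∃ r, ∑ l, PowerSeries.C (α l) * p i l = PowerSeries.X * r := by
      intro i
      apply PowerSeries.X_dvd_iff.2
      have := congrFun hAα i
      simp only [Matrix.mulVec, dotProduct, Matrix.map_apply, Pi.zero_apply] at this
      rw [map_sum, ← this]
      refine Finset.sum_congr rfl fun l _ => ?_
      rw [map_mul, PowerSeries.constantCoeff_C, mul_comm]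
    choose r hr using hX
    have hv : ∀ i, (B.mulVec fun l => polyK Fq (u l)) i = xp Fq (k j - 1) * ps Fq (r i) := by
      intro i
      have e : xp Fq (k j - 1) * ps Fq (r i) = xp Fq (k j) * ps Fq (PowerSeries.X * r i) := by
        rw [sub_eq_add_neg, xp_add, map_mul, ps_X, mul_assoc]
      rw [e, ← hr, map_sum, Finset.mul_sum]
      simp only [Matrix.mulVec, dotProduct]
      refine Finset.sum_congr rfl fun l _ => ?_
      by_cases hl : α l = 0
      · simp [u, hl]
      · have hkl := hmax l hl
        have : ((k j : ℕ) : ℤ) = k l + ((k j - k l : ℕ) : ℤ) := by omega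
        rw [this, xp_add, hB, map_mul, map_mul, map_pow, polyK_C, polyK_X, Kx_pow, ps_C]
        ring
    have hbase : k j = 0 → ∃ v ∈ lattice Fq B, v ≠ 0 ∧ ∀ i, ∃ r, v i = xp Fq (-1) * ps Fq r := by
      intro hkj
      refine ⟨_, ⟨u, rfl⟩, ?_, fun i => ⟨r i, ?_⟩⟩
      · intro h0
        have := Matrix.eq_zero_of_mulVec_eq_zero hdet h0
        have := congrFun this j
        have := (map_eq_zero_iff _ (polyK_injective Fq)).1 this
        simp [u, hj] at this
      · rw [hv i, hkj]; simp
  · apply hbase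
    have := Finset.single_le_sum (f := k) (fun i _ => Nat.zero_le _) (Finset.mem_univ j)
    omega
  · by_cases hkj : k j = 0
    · exact hbase hkj
    let U : Matrix (Fin d) (Fin d) (Polynomial Fq) := (1 : Matrix _ _ _).updateCol j u
    have hUdet : U.det = Polynomial.C (α j) := by
      have : U.det = u j := by
        have := Matrix.cramer_apply (1 : Matrix (Fin d) (Fin d) (Polynomial Fq)) u j
        rw [Matrix.cramer_one] at this
        exact this.symm
      rw [this]
      simp [u]
    have hentry : ∀ i l, (B * U.map (polyK Fq)) i l =
        if l = j then xp Fq (k j - 1) * ps Fq (r i) else B i l := by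
      intro i l
      split_ifs with hl
      · subst hl
        rw [← hv i]
        simp [U, Matrix.mul_apply, Matrix.mulVec, dotProduct]
      · simp [U, Matrix.mul_apply, hl, Matrix.one_apply, apply_ite (polyK Fq)]
    have hd' : (B * U.map (polyK Fq)).det = B.det * HahnSeries.C (α j) := by
      rw [Matrix.det_mul, ← polyK_C, ← hUdet, RingHom.map_det]
      rfl
    have hCne : (HahnSeries.C (α j) : Kt Fq) ≠ 0 := by
      simpa using hj
    obtain ⟨v, ⟨c, hc⟩, hv0, hvr⟩ := ih (B * U.map (polyK Fq)) (Function.update k j (k j - 1))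
      (fun i l => if l = j then r i else p i l) (by
        have h1 := Finset.sum_update_of_mem (Finset.mem_univ j) k (k j - 1)
        have h2 := Finset.add_sum_erase Finset.univ k (Finset.mem_univ j)
        rw [Finset.sdiff_singleton_eq_erase] at h1
        omega) (by
        intro i l
        rw [hentry]
        split_ifs with hl
        · subst hl
          rw [Function.update_self, Nat.cast_sub (by omega)]
          simp
        · rw [Function.update_of_ne hl, hB]) (by
        rw [hd']; exact mul_ne_zero hdet hCne) (by
        rw [hd', Kabs_mul]
        refine lt_of_le_of_lt (mul_le_of_le_one_right (Kabs_nonneg _ _) ?_) hlt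
        rw [← ps_C]
        exact Kabs_ps _ _)
    refine ⟨v, ⟨U.mulVec c, ?_⟩, hv0, hvr⟩
    rw [hc, ← Matrix.mulVec_mulVec]
    congr 1
    ext1 i
    simp [Matrix.mulVec, dotProduct, map_sum, map_mul]

lemma minkowski {d : ℕ} (g : Matrix (Fin d) (Fin d) (Kt Fq)) (hg : Kabs Fq g.det = 1)
    (n : Fin d → ℤ) (hn : 0 < ∑ i, n i) :
    ∃ v ∈ lattice Fq g, v ≠ 0 ∧ ∀ i, Kabs Fq (v i) ≤ (Fintype.card Fq : ℝ) ^ (n i - 1) := by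
  have hq := one_lt_q Fq
  let B : Matrix (Fin d) (Fin d) (Kt Fq) := Matrix.of fun i j => xp Fq (-n i) * g i j
  have hBdet : B.det = xp Fq (∑ i, -n i) * g.det := by
    rw [xp_sum, ← Matrix.det_mul_column]
  have hgne : g.det ≠ 0 := by
    intro h; rw [h, Kabs_zero] at hg; norm_num at hg
  obtain ⟨K, hK⟩ : ∃ K : ℕ, ∀ i j, Kabs Fq (B i j) ≤ (Fintype.card Fq : ℝ) ^ (K : ℤ) := by
    obtain ⟨M, hM⟩ := (Set.finite_range fun x : Fin d × Fin d => Kabs Fq (B x.1 x.2)).bddAbove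
    obtain ⟨K, hK⟩ := pow_unbounded_of_one_lt M hq
    refine ⟨K, fun i j => ?_⟩
    rw [zpow_natCast]
    exact (hM ⟨(i, j), rfl⟩).trans hK.le
  simp only [Kabs_le_iff] at hK
  choose p hp using hK
  obtain ⟨v, ⟨c, hc⟩, hv0, hvr⟩ := reduction Fq _ B (fun _ => K) p rfl hp
    (by rw [hBdet]; exact mul_ne_zero (xp_ne _ _) hgne)
    (by
      rw [hBdet, Kabs_mul, hg, mul_one, Kabs_xp]
      apply zpow_lt_one_of_neg₀ hq
      simpa using hn)
  have hvi : ∀ i, v i = xp Fq (-n i) * (g.mulVec fun j => polyK Fq (c j)) i := by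
    intro i
    rw [hc]
    simp only [Matrix.mulVec, dotProduct, Finset.mul_sum, B, Matrix.of_apply, mul_assoc]
  refine ⟨_, ⟨c, rfl⟩, ?_, fun i => ?_⟩
  · intro h0
    apply hv0
    ext1 i
    rw [hvi, h0]
    simp
  · rw [Kabs_le_iff]
    obtain ⟨r, hr⟩ := hvr i
    refine ⟨r, ?_⟩
    rw [hvi] at hr
    rw [sub_eq_add_neg, xp_add, mul_assoc, ← hr, ← mul_assoc, ← xp_add, add_neg_cancel, xp_zero,
      one_mul]

lemma le_anorm {d : ℕ} (a : Fin d → ℝ) (v : Fin d → Kt Fq) (i : Fin d) :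
    (Fintype.card Fq : ℝ) ^ a i * Kabs Fq (v i) ≤ anorm Fq a v :=
  le_ciSup (f := fun i => (Fintype.card Fq : ℝ) ^ a i * Kabs Fq (v i))
    (Set.finite_range _).bddAbove i

/-- Any `r` admissible for the last minimum satisfies the determinant inequality. -/
lemma sum_floor_nonneg {d : ℕ} (a : Fin d → ℝ) (g : Matrix (Fin d) (Fin d) (Kt Fq))
    (hg : Kabs Fq g.det = 1) (L : ℝ) (v : Fin d → Fin d → Kt Fq)
    (hv : ∀ j, v j ∈ lattice Fq g) (hli : LinearIndependent (Kt Fq) v)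
    (hr : ∀ j, anorm Fq a (v j) ≤ (Fintype.card Fq : ℝ) ^ L) :
    0 ≤ ∑ i, ⌊L - a i⌋ := by
  have hq := one_lt_q Fq
  have hq0 : (0:ℝ) < Fintype.card Fq := by linarith
  choose c hc using hv
  let V : Matrix (Fin d) (Fin d) (Kt Fq) := Matrix.of fun i j => v j i
  have hVg : V = g * (Matrix.of fun i j => c j i).map (polyK Fq) := by
    ext1 i j
    simp [V, hc, Matrix.mul_apply, Matrix.mulVec, dotProduct]
  have hVne : V.det ≠ 0 := by
    have h1 : LinearIndependent (Kt Fq) (V.transpose).row := hli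
    have h2 := Matrix.linearIndependent_rows_iff_isUnit.1 h1
    rw [Matrix.isUnit_iff_isUnit_det, Matrix.det_transpose] at h2
    exact h2.ne_zero
  have hdet : V.det = g.det * polyK Fq (Matrix.of fun i j => c j i).det := by
    rw [RingHom.map_det]
    conv_lhs => rw [hVg]
    rw [Matrix.det_mul]
    rfl
  have h1 : 1 ≤ Kabs Fq V.det := by
    rw [hdet, Kabs_mul, hg, one_mul]
    apply Kabs_polyK
    intro h0
    rw [h0, map_zero, mul_zero] at hdet
    exact hVne hdet
  have h2 : Kabs Fq V.det ≤ (Fintype.card Fq : ℝ) ^ (∑ i, ⌊L - a i⌋) := by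
    apply Kabs_det_le
    intro i j
    by_cases h0 : V i j = 0
    · rw [h0, Kabs_zero]; positivity
    have h3 := (le_anorm Fq a (v j) i).trans (hr j)
    have h4 : Kabs Fq (V i j) ≤ (Fintype.card Fq : ℝ) ^ (L - a i) := by
      rw [Real.rpow_sub hq0, le_div_iff₀ (by positivity), mul_comm]
      exact h3
    unfold Kabs at h4 ⊢
    rw [if_neg h0] at h4 ⊢
    rw [← Real.rpow_intCast, Real.rpow_le_rpow_left_iff hq] at h4
    rw [zpow_le_zpow_iff_right₀ hq]
    exact Int.le_floor.2 h4
  have h3 := h1.trans h2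
  by_contra! hneg
  exact absurd (zpow_lt_one_of_neg₀ hq hneg) (not_lt.2 h3)

lemma exists_eps {d : ℕ} (y : Fin d → ℝ) : ∃ ε > 0, ∀ i, ⌊y i + ε⌋ ≤ ⌊y i⌋ := by
  have h : ∀ i, ∃ ε > 0, ⌊y i + ε⌋ ≤ ⌊y i⌋ := by
    intro i
    refine ⟨(1 - Int.fract (y i)) / 2, by linarith [Int.fract_lt_one (y i)], ?_⟩
    rw [← Int.lt_add_one_iff, Int.floor_lt]
    push_cast
    have := Int.floor_add_fract (y i)
    linarith [Int.fract_lt_one (y i)]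
  choose e he hf using h
  obtain ⟨ε, h0, hε⟩ : ∃ ε > 0, ∀ i, ε ≤ e i := by
    by_cases hd : Nonempty (Fin d)
    · obtain ⟨i, hi⟩ := Finite.exists_min e
      exact ⟨e i, he i, hi⟩
    · exact ⟨1, one_pos, fun i => (hd ⟨i⟩).elim⟩
  exact ⟨ε, h0, fun i => (Int.floor_mono (by linarith [hε i])).trans (hf i)⟩

/-- If all the `‖·‖_a`-successive minima of a unimodular lattice coincide,
then the coordinates of `a` are all congruent modulo `1`. -/
theorem congruent_mod_one_of_trivial_flag {d : ℕ} (hd : 2 ≤ d)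
    (a : Fin d → ℝ) (ha : ∑ i, a i = 0)
    (g : Matrix (Fin d) (Fin d) (Kt Fq)) (hg : Kabs Fq g.det = 1)
    (heq : ∀ i : Fin d, minimaN Fq (anorm Fq a) (lattice Fq g) ((i : ℕ) + 1)
      = minimaN Fq (anorm Fq a) (lattice Fq g) 1) :
    ∀ i j : Fin d, ∃ n : ℤ, a i - a j = (n : ℝ) := by
  have hq := one_lt_q Fq
  have hq0 : (0:ℝ) < Fintype.card Fq := by linarith
  have hgne : g.det ≠ 0 := by
    intro h; rw [h, Kabs_zero] at hg; norm_num at hg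
  have hd0 : (0:ℝ) < d := by exact_mod_cast (by omega : 0 < d)
  set lam := minimaN Fq (anorm Fq a) (lattice Fq g) 1 with hlam
  have hd1 : minimaN Fq (anorm Fq a) (lattice Fq g) d = lam := by
    have := heq ⟨d - 1, by omega⟩
    rwa [show (d - 1 : ℕ) + 1 = d by omega] at this
  -- the set of admissible radii for the last minimum
  set S := {r : ℝ | 0 < r ∧ ∃ v : Fin d → Fin d → Kt Fq,
    (∀ j, v j ∈ lattice Fq g) ∧ LinearIndependent (Kt Fq) v ∧ ∀ j, anorm Fq a (v j) ≤ r} with hS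
  have hSlam : sInf S = lam := hd1
  have hSfloor : ∀ r ∈ S, 0 ≤ ∑ i, ⌊Real.logb (Fintype.card Fq) r - a i⌋ := by
    rintro r ⟨hr0, v, hv, hli, hr⟩
    refine sum_floor_nonneg Fq a g hg _ v hv hli ?_
    rwa [Real.rpow_logb hq0 hq.ne' hr0]
  have hSge : ∀ r ∈ S, 1 ≤ r := by
    intro r hr
    have h1 : ((0:ℤ):ℝ) ≤ ((∑ i, ⌊Real.logb (Fintype.card Fq) r - a i⌋ : ℤ) : ℝ) :=
      Int.cast_le.2 (hSfloor r hr)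
    have h2 : ((∑ i, ⌊Real.logb (Fintype.card Fq) r - a i⌋ : ℤ) : ℝ)
        ≤ ∑ i, (Real.logb (Fintype.card Fq) r - a i) := by
      push_cast
      exact Finset.sum_le_sum fun i _ => Int.floor_le _
    rw [Finset.sum_sub_distrib, ha] at h2
    simp only [Finset.sum_const, Finset.card_univ, Fintype.card_fin, nsmul_eq_mul, sub_zero] at h2
    push_cast at h1
    have h3 : 0 ≤ Real.logb (Fintype.card Fq) r := by
      by_contra! hneg
      push_cast at h2
      nlinarith
    rwa [Real.logb_nonneg_iff hq hr.1] at h3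
  have hSne : S.Nonempty := by
    let v : Fin d → Fin d → Kt Fq := fun j i => g i j
    obtain ⟨M, hM⟩ := (Set.finite_range fun j => anorm Fq a (v j)).bddAbove
    refine ⟨max M 1, by positivity, v, fun j => ⟨Pi.single j 1, ?_⟩, ?_, fun j => ?_⟩
    · have : (fun l => polyK Fq ((Pi.single j 1 : Fin d → Polynomial Fq) l))
          = Pi.single j 1 := by
        ext1 l
        by_cases hl : l = j
        · subst hl; simp
        · simp [hl]
      rw [this, Matrix.mulVec_single_one]
      rfl
    · have h2 : IsUnit g.transpose := by
        rw [Matrix.isUnit_iff_isUnit_det, Matrix.det_transpose]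
        exact isUnit_iff_ne_zero.2 hgne
      exact Matrix.linearIndependent_rows_iff_isUnit.2 h2
    · exact (hM ⟨j, rfl⟩).trans (le_max_left _ _)
  have hlam1 : 1 ≤ lam := hSlam ▸ le_csInf hSne hSge
  have hlam0 : 0 < lam := by linarith
  set L := Real.logb (Fintype.card Fq) lam with hL
  have hqL : (Fintype.card Fq : ℝ) ^ L = lam := Real.rpow_logb hq0 hq.ne' hlam0
  have hfloor : 0 ≤ ∑ i, ⌊L - a i⌋ := by
    obtain ⟨ε, hε, hfl⟩ := exists_eps fun i => L - a i
    have hlt : sInf S < (Fintype.card Fq : ℝ) ^ (L + ε) := by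
      rw [hSlam]
      conv_lhs => rw [← hqL]
      exact Real.rpow_lt_rpow_of_exponent_lt hq (by linarith)
    obtain ⟨r, hr, hrlt⟩ := exists_lt_of_csInf_lt hSne hlt
    refine (hSfloor r hr).trans (Finset.sum_le_sum fun i _ => ?_)
    refine (Int.floor_mono ?_).trans (hfl i)
    have : Real.logb (Fintype.card Fq) r ≤ L + ε := by
      rw [Real.logb_le_iff_le_rpow hq hr.1]
      exact hrlt.le
    linarith
  have hceil : ∑ i, ⌈L - a i⌉ ≤ 0 := by
    by_contra! hpos
    obtain ⟨v, hv, hv0, hvn⟩ := minkowski Fq g hg _ hpos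
    have hne : Nonempty (Fin d) := ⟨⟨0, by omega⟩⟩
    have hlt : anorm Fq a v < lam := by
      obtain ⟨i, hi⟩ := exists_eq_ciSup_of_finite
        (f := fun i => (Fintype.card Fq : ℝ) ^ a i * Kabs Fq (v i))
      have : anorm Fq a v = (Fintype.card Fq : ℝ) ^ a i * Kabs Fq (v i) := hi.symm
      rw [this]
      calc (Fintype.card Fq : ℝ) ^ a i * Kabs Fq (v i)
          ≤ (Fintype.card Fq : ℝ) ^ a i * (Fintype.card Fq : ℝ) ^ (⌈L - a i⌉ - 1) := by
            gcongr
            exact hvn i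
        _ = (Fintype.card Fq : ℝ) ^ (a i + ((⌈L - a i⌉ - 1 : ℤ) : ℝ)) := by
            rw [Real.rpow_add hq0, Real.rpow_intCast]
        _ < (Fintype.card Fq : ℝ) ^ L := by
            apply Real.rpow_lt_rpow_of_exponent_lt hq
            push_cast
            linarith [Int.ceil_lt_add_one (L - a i)]
        _ = lam := hqL
    have hpos' : 0 < anorm Fq a v := by
      obtain ⟨i, hi⟩ := Function.ne_iff.1 hv0
      refine lt_of_lt_of_le ?_ (le_anorm Fq a v i)
      have := Kabs_pos Fq hi
      positivity
    have hle : lam ≤ anorm Fq a v := by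
      rw [hlam]
      refine csInf_le ⟨0, fun r hr => hr.1.le⟩ ⟨hpos', fun _ => v, fun _ => hv, ?_, fun _ => le_rfl⟩
      exact linearIndependent_unique_iff.2 hv0
    linarith
  have hfloor_eq : ∀ i, ((⌊L - a i⌋ : ℤ) : ℝ) = L - a i := by
    have h1 : ∀ i ∈ Finset.univ, ⌊L - a i⌋ ≤ ⌈L - a i⌉ := fun i _ => Int.floor_le_ceil _
    have h2 := (Finset.sum_eq_sum_iff_of_le h1).1
      (le_antisymm (Finset.sum_le_sum h1) (hceil.trans hfloor))
    intro i
    apply le_antisymm (Int.floor_le _)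
    rw [h2 i (Finset.mem_univ i)]
    exact Int.le_ceil _
  intro i j
  refine ⟨⌊L - a j⌋ - ⌊L - a i⌋, ?_⟩
  push_cast
  rw [hfloor_eq, hfloor_eq]
  ring
end
end
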